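/- arXiv:1112.4409 — 3 statements merged into one kernel-verified Lean document; each statement's English description precedes it below -/
import Mathlib

section
/- (Dovbysh–Sudakov representation) If (R_{l,l'})_{l,l'≥1} is a Gram–de Finetti array with R_{l,l} = 1 for all l, then there exists a random probability measure G on the unit ball of a separable Hilbert space such that (R_{l,l'})_{l,l'≥1} is equal in distribution to (ρ^l·ρ^{l'} + δ_{l,l'}(1 − ‖ρ^l‖²))_{l,l'≥1}, where (ρ^l)_{l≥1} is an i.i.d. sample from G (drawn conditionally on G) and δ_{l,l'} is the Kronecker delta. -/
open MeasureTheory ProbabilityTheory Real Filter RealInnerProductSpace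

noncomputable section

/-- The separable Hilbert space `ℓ²` of square-summable real sequences. -/
abbrev ell2 : Type := ↥(lp (fun _ : ℕ => ℝ) 2)

instance : MeasurableSpace ell2 := borel ell2
instance : BorelSpace ell2 := ⟨rfl⟩

/-!
Reindex the array by `ℕ ⊕ ℤ` and regard it as the array of inner products of unit vectors. Apply
the Gram–Schmidt process to the vectors with indices in `ℕ`, and let `ρ z` be the point of the unit
ball of `ℓ²` whose entries are the coordinates of the vector with index `z : ℤ` in the resulting
orthonormal system.

Let `x` and `y` be two of the vectors with indices in `ℤ`, and `eₙ` the `n`-th of those with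
indices in `ℕ`, all three after removal of their components along the first `n` basis vectors. By
Bessel's inequality the sum over `n` of `⟪x, eₙ⟫² / ‖eₙ‖²` is at most `1`. Weak exchangeability
allows `eₙ` to be exchanged with `y`, and `‖y‖ ≤ 1`, so the sum of the expectations of `⟪x, y⟫²` is
at most `1` as well, and `⟪x, y⟫ → 0` almost surely. Hence off the diagonal the array consists of
the inner products of the points `ρ z`.

The sequence `ρ` is exchangeable. De Finetti's theorem for an exchangeable sequence indexed by `ℤ`
is proved with the conditional law `G` of `ρ 0` given the negative indices: by exchangeability, the
conditional expectation of `f (ρ n)` given all indices less than `n` has the same distribution as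
the one given the negative indices only, and having the same variance the two agree. Successive
conditioning then factorizes the conditional expectation of a product.
-/

open Function (Injective onFun)

section Exchangeability

variable {ι κ E : Type*} [MeasurableSpace E]

/-- Exchangeability of the law `ν` of a family of random variables indexed by `ι`. Invariance is
required under all injections of the index set; for a probability measure this is equivalent to
invariance under the permutations of finitely many indices. -/
def IsExchangeable (ν : Measure (ι → E)) : Prop :=
  ∀ φ : ι → ι, Injective φ → MeasurePreserving (fun s => s ∘ φ) ν ν

/-- Weak exchangeability of the law `μ` of a random array: invariance under applying the same
injection to rows and columns, with the same convention as in `IsExchangeable`. -/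
def IsWeaklyExchangeable (μ : Measure (ι → ι → E)) : Prop :=
  ∀ φ : ι → ι, Injective φ → MeasurePreserving (fun r => onFun r φ) μ μ

theorem measurable_onFun (φ : κ → ι) : Measurable fun r : ι → ι → E => onFun r φ := by
  unfold onFun
  fun_prop

theorem exists_perm_finite_support_eqOn {φ : ι → ι} (hφ : Injective φ)
    (s : Finset ι) : ∃ σ : Equiv.Perm ι, {i | σ i ≠ i}.Finite ∧ Set.EqOn σ φ s := by
  classical
  induction s using Finset.induction_on with
  | empty => exact ⟨1, by simp, by simp⟩
  | insert a s ha ih =>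
    obtain ⟨σ, hσ_fin, hσ_eq⟩ := ih
    refine ⟨Equiv.swap (σ a) (φ a) * σ, ?_, ?_⟩
    · refine (hσ_fin.union (Set.toFinite {σ a, φ a})).subset fun i hi => ?_
      contrapose! hi
      simp only [Set.mem_union, Set.mem_ofPred_eq, Set.mem_insert_iff, Set.mem_singleton_iff,
        not_or, not_not] at hi
      obtain ⟨hσi, hia, hiφ⟩ := hi
      simp [hσi, Equiv.swap_apply_of_ne_of_ne hia hiφ]
    · intro i hi
      obtain rfl | his := Finset.mem_insert.mp hi
      · simp
      · have hne : i ≠ a := fun h => ha (h ▸ his)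
        rw [Equiv.Perm.mul_apply, hσ_eq his,
          Equiv.swap_apply_of_ne_of_ne (hσ_eq his ▸ σ.injective.ne hne) (hφ.ne hne)]

theorem isWeaklyExchangeable_of_perm [Countable ι] [TopologicalSpace E]
    [TopologicalSpace.PseudoMetrizableSpace E] [SecondCountableTopology E] [BorelSpace E]
    {μ : Measure (ι → ι → E)} [IsProbabilityMeasure μ]
    (h : ∀ σ : Equiv.Perm ι, {i | σ i ≠ i}.Finite →
      μ.map (fun r => onFun r σ) = μ) :
    IsWeaklyExchangeable μ := by
  intro φ hφ
  choose σ hσ_fin hσ_eq using exists_perm_finite_support_eqOn hφ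
  have tendsto_onFun (r : ι → ι → E) :
      Tendsto (fun s => onFun r (σ s)) atTop (nhds (onFun r φ)) := by
    refine tendsto_pi_nhds.2 fun i => tendsto_pi_nhds.2 fun j => tendsto_const_nhds.congr' ?_
    filter_upwards [eventually_ge_atTop {i}, eventually_ge_atTop {j}] with s his hjs
    rw [onFun, onFun, hσ_eq s (his (by simp)), hσ_eq s (hjs (by simp))]
  have to_onFun : TendstoInDistribution (fun s r => onFun r (σ s)) atTop (fun r => onFun r φ)
      (fun _ => μ) μ :=
    tendstoInDistribution_of_ae_tendsto (fun _ => (measurable_onFun _).aemeasurable)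
      (measurable_onFun _).aemeasurable
      (ae_of_all _ tendsto_onFun)
  have to_id : TendstoInDistribution (fun s r => onFun r (σ s)) atTop id (fun _ => μ) μ := by
    have identDistrib_id (s : Finset ι) : IdentDistrib (fun r => onFun r (σ s)) id μ μ :=
      ⟨(measurable_onFun _).aemeasurable, aemeasurable_id, by rw [h _ (hσ_fin s), Measure.map_id]⟩
    exact tendstoInDistribution_of_identDistrib ∅
      (fun s => (identDistrib_id ∅).trans (identDistrib_id s).symm) (identDistrib_id ∅)
  refine ⟨measurable_onFun φ, ?_⟩
  rw [tendstoInDistribution_unique _ to_onFun to_id, Measure.map_id]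

theorem IsWeaklyExchangeable.map_onFun_equiv {μ : Measure (ι → ι → E)}
    (hμ : IsWeaklyExchangeable μ) (e : κ ≃ ι) :
    IsWeaklyExchangeable (μ.map fun r => onFun r e) := by
  intro φ hφ
  refine ⟨measurable_onFun φ, ?_⟩
  have hinj : Injective (e ∘ φ ∘ e.symm) := e.injective.comp (hφ.comp e.symm.injective)
  conv_rhs => rw [← (hμ _ hinj).map_eq, Measure.map_map (measurable_onFun _) (measurable_onFun _)]
  rw [Measure.map_map (measurable_onFun _) (measurable_onFun _)]
  congr 1
  ext r i j
  simp [onFun]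

end Exchangeability

section ConditionalExpectation

variable {Ω E F : Type*} [MeasurableSpace E] [MeasurableSpace F] {m m₀ : MeasurableSpace Ω}
  {μ : Measure Ω}

theorem measurable_integral_measure {f : E → ℝ} (hf : Measurable f) :
    Measurable fun ν : Measure E => ∫ x, f x ∂ν :=
  (hf.stronglyMeasurable.integral_kernel
    (κ := (⟨id, measurable_id⟩ : Kernel (Measure E) E))).measurable

theorem memLp_top_comp_of_bounded {f : E → ℝ} (hf : Measurable f)
    (hf_bdd : ∃ C, ∀ x, |f x| ≤ C) {X : Ω → E} (hX : Measurable X) :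
    MemLp (fun ω => f (X ω)) ⊤ μ := by
  obtain ⟨C, hC⟩ := hf_bdd
  exact memLp_top_of_bound (hf.comp hX).aestronglyMeasurable C (ae_of_all _ fun ω => hC (X ω))

theorem condExp_ae_eq_of_le_of_condExp_ae_eq [IsFiniteMeasure μ] {m' : MeasurableSpace Ω}
    (hm : m ≤ m') (hm' : m' ≤ m₀) {X Y : Ω → ℝ} (hY : StronglyMeasurable[m] Y)
    (h : μ[X | m'] =ᵐ[μ] Y) : μ[X | m] =ᵐ[μ] Y :=
  calc μ[X | m] =ᵐ[μ] μ[μ[X | m'] | m] := (condExp_condExp_of_le hm hm').symm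
    _ =ᵐ[μ] μ[Y | m] := condExp_congr_ae h
    _ = Y := condExp_of_stronglyMeasurable (hm.trans hm') hY (integrable_condExp.congr h)

theorem condExp_ae_eq_self_of_variance_condExp_eq [IsProbabilityMeasure μ] (hm : m ≤ m₀)
    {X : Ω → ℝ} (hX : MemLp X 2 μ) (h : Var[μ[X | m]; μ] = Var[X; μ]) : μ[X | m] =ᵐ[μ] X := by
  have integrable_sq : Integrable ((X - μ[X | m]) ^ 2) μ :=
    (hX.sub (hX.condExp one_le_two)).integrable_sq
  have integral_sq : ∫ ω, ((X - μ[X | m]) ^ 2) ω ∂μ = 0 := by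
    have total_variance := integral_condVar_add_variance_condExp hm hX
    rw [condVar, integral_condExp hm, h] at total_variance
    linarith
  have sq_ae_eq :=
    (integral_eq_zero_iff_of_nonneg (fun ω => sq_nonneg _) integrable_sq).1 integral_sq
  filter_upwards [sq_ae_eq] with ω hω
  exact (sub_eq_zero.1 (pow_eq_zero_iff two_ne_zero |>.1 hω)).symm

/- Both conditional expectations are the same function of `Y`, resp. `Z`, so they have the same
variance, and one is the conditional expectation of the other. -/
theorem condExp_comap_ae_eq_of_map_prodMk_eq [StandardBorelSpace E] [Nonempty E]
    [IsProbabilityMeasure μ] {X : Ω → E} {Y Z : Ω → F} (hX : Measurable X) (hY : Measurable Y)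
    (hZ : Measurable Z)
    (hYZ : MeasurableSpace.comap Y inferInstance ≤ MeasurableSpace.comap Z inferInstance)
    (h : μ.map (fun ω => (Z ω, X ω)) = μ.map (fun ω => (Y ω, X ω))) {f : E → ℝ}
    (hf : Measurable f) (hfX : MemLp (fun ω => f (X ω)) 2 μ) :
    μ[fun ω => f (X ω) | MeasurableSpace.comap Z inferInstance] =ᵐ[μ]
      μ[fun ω => f (X ω) | MeasurableSpace.comap Y inferInstance] := by
  set g : F → ℝ := fun y => ∫ x, f x ∂(condDistrib X Y μ y)
  have hg : Measurable g := (measurable_integral_measure hf).comp (Kernel.measurable _)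
  have condExp_Y := condExp_ae_eq_integral_condDistrib hY hX.aemeasurable hf.stronglyMeasurable
    (hfX.integrable one_le_two)
  have condExp_Z := condExp_ae_eq_integral_condDistrib hZ hX.aemeasurable hf.stronglyMeasurable
    (hfX.integrable one_le_two)
  have condDistrib_eq : condDistrib X Z μ = condDistrib X Y μ := by simp only [condDistrib, h]
  rw [condDistrib_eq] at condExp_Z
  have condExp_condExp := condExp_condExp_of_le hYZ hZ.comap_le (f := fun ω => f (X ω)) (μ := μ)
  refine ((condExp_ae_eq_self_of_variance_condExp_eq hY.comap_le (hfX.condExp one_le_two)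
    ?_).symm.trans condExp_condExp)
  have map_eq : μ.map Z = μ.map Y := by
    simpa [Measure.fst_map_prodMk, hX] using congrArg Measure.fst h
  have identDistrib : IdentDistrib (g ∘ Y) (g ∘ Z) μ μ :=
    IdentDistrib.comp ⟨hY.aemeasurable, hZ.aemeasurable, map_eq.symm⟩ hg
  rw [variance_congr (condExp_condExp.trans condExp_Y), variance_congr condExp_Z]
  exact identDistrib.variance_eq

theorem condExp_prod_ae_eq_prod_condExp [IsFiniteMeasure μ] (hm : m ≤ m₀) {n : ℕ}
    {ℱ : Fin n → MeasurableSpace Ω} (hmℱ : ∀ i, m ≤ ℱ i) (hℱ : ∀ i, ℱ i ≤ m₀)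
    {X : Fin n → Ω → ℝ} (hX : ∀ i, MemLp (X i) ⊤ μ)
    (hXℱ : ∀ i j, i < j → StronglyMeasurable[ℱ j] (X i))
    (h : ∀ i, μ[X i | ℱ i] =ᵐ[μ] μ[X i | m]) :
    μ[∏ i, X i | m] =ᵐ[μ] ∏ i, μ[X i | m] := by
  induction n with
  | zero =>
    simp only [Finset.univ_eq_empty, Finset.prod_empty]
    exact (condExp_const hm (1 : ℝ)).eventuallyEq
  | succ n ih =>
    set A := ∏ i : Fin n, X i.castSucc
    set Y := X (Fin.last n)
    have hA : MemLp A ⊤ μ := by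
      simpa using MemLp.prod (s := Finset.univ) (p := fun _ => ⊤)
        fun (i : Fin n) _ => hX i.castSucc
    have hY : MemLp Y ⊤ μ := hX (Fin.last n)
    have hAℱ : StronglyMeasurable[ℱ (Fin.last n)] A :=
      Finset.stronglyMeasurable_prod _ fun i _ => hXℱ _ _ (Fin.castSucc_lt_last i)
    have hAY : Integrable (A * Y) μ := (hY.mul hA (r := ⊤)).integrable le_top
    have hAcondY : Integrable (A * μ[Y | m]) μ :=
      ((hY.condExp le_top).mul hA (r := ⊤)).integrable le_top
    have ih_A : μ[A | m] =ᵐ[μ] ∏ i : Fin n, μ[X i.castSucc | m] :=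
      ih (fun i => hmℱ _) (fun i => hℱ _) (fun i => hX _)
        (fun i j hij => hXℱ _ _ (Fin.castSucc_lt_castSucc_iff.2 hij)) (fun i => h _)
    rw [Fin.prod_univ_castSucc, Fin.prod_univ_castSucc]
    calc μ[A * Y | m] =ᵐ[μ] μ[μ[A * Y | ℱ (Fin.last n)] | m] :=
          (condExp_condExp_of_le (hmℱ _) (hℱ _)).symm
      _ =ᵐ[μ] μ[A * μ[Y | ℱ (Fin.last n)] | m] := condExp_congr_ae
          (condExp_mul_of_stronglyMeasurable_left hAℱ hAY (hY.integrable le_top))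
      _ =ᵐ[μ] μ[A * μ[Y | m] | m] := condExp_congr_ae (EventuallyEq.rfl.mul (h _))
      _ =ᵐ[μ] μ[A | m] * μ[Y | m] := condExp_mul_of_stronglyMeasurable_right
          stronglyMeasurable_condExp hAcondY (hA.integrable le_top)
      _ =ᵐ[μ] (∏ i : Fin n, μ[X i.castSucc | m]) * μ[Y | m] := ih_A.mul EventuallyEq.rfl

end ConditionalExpectation

section DeFinetti

variable {Ω E E' : Type*} [MeasurableSpace E] [MeasurableSpace E']

theorem measurable_prod_integral_comap {n : ℕ} {f : Fin n → E → ℝ} (hf : ∀ i, Measurable (f i))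
    (G : Ω → Measure E) :
    Measurable[MeasurableSpace.comap G inferInstance] fun ω => ∏ i, ∫ x, f i x ∂(G ω) :=
  (Finset.measurable_prod _ fun i _ => measurable_integral_measure (hf i)).comp
    (comap_measurable G)

variable [MeasurableSpace Ω]

/-- Conditionally on the random measure `G`, the sequence `ρ` is independent and identically
distributed with law `G`. This is expressed by the conditional expectations given `G` of products of
bounded functions of finitely many members of the sequence. -/
def IsSampleFrom (P : Measure Ω) (G : Ω → Measure E) (ρ : ℕ → Ω → E) : Prop :=
  ∀ (n : ℕ) (f : Fin n → E → ℝ), (∀ i, Measurable (f i)) → (∀ i, ∃ C, ∀ x, |f i x| ≤ C) →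
    P[fun ω => ∏ i, f i (ρ i ω) | MeasurableSpace.comap G inferInstance]
      =ᵐ[P] fun ω => ∏ i, ∫ x, f i x ∂(G ω)

theorem IsSampleFrom.map {P : Measure Ω} [IsFiniteMeasure P] {G : Ω → Measure E} {ρ : ℕ → Ω → E}
    (hρ : IsSampleFrom P G ρ) (hG : Measurable G) {g : E → E'} (hg : Measurable g) :
    IsSampleFrom P (fun ω => (G ω).map g) (fun n ω => g (ρ n ω)) := by
  intro n f hf hf_bdd
  have hG' : Measurable[MeasurableSpace.comap G inferInstance] fun ω => (G ω).map g :=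
    (Measure.measurable_map g hg).comp (comap_measurable G)
  refine condExp_ae_eq_of_le_of_condExp_ae_eq (Measurable.comap_le hG') hG.comap_le
    (measurable_prod_integral_comap hf _).stronglyMeasurable ?_
  simp only [integral_map hg.aemeasurable (hf _).aestronglyMeasurable]
  exact hρ n (fun i => f i ∘ g) (fun i => (hf i).comp hg)
    (fun i => (hf_bdd i).imp fun C hC x => hC (g x))

/-- The members of a two-sided sequence with index less than `n`, in decreasing order. -/
def past (n : ℤ) (s : ℤ → E) : ℕ → E := fun k => s (n - 1 - k)

@[fun_prop]
theorem measurable_past (n : ℤ) : Measurable (past n : (ℤ → E) → ℕ → E) := by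
  unfold past
  fun_prop

theorem measurable_eval_comap_past {i n : ℤ} (hin : i < n) :
    Measurable[MeasurableSpace.comap (past n) inferInstance] fun s : ℤ → E => s i := by
  have eval_eq : (fun s : ℤ → E => s i) = (fun t : ℕ → E => t (n - 1 - i).toNat) ∘ past n := by
    ext s
    simp only [past, Function.comp_apply]
    congr 1
    omega
  rw [eval_eq]
  exact (measurable_pi_apply _).comp (comap_measurable _)

theorem comap_past_mono {k n : ℤ} (hkn : k ≤ n) :
    MeasurableSpace.comap (past k : (ℤ → E) → ℕ → E) inferInstance ≤
      MeasurableSpace.comap (past n) inferInstance :=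
  Measurable.comap_le <| (@measurable_pi_iff _ _ _ (MeasurableSpace.comap (past n) _) _ _).2
    fun _ => measurable_eval_comap_past (by omega)

variable {ν : Measure (ℤ → E)}

theorem IsExchangeable.map_past_prodMk (hν : IsExchangeable ν) {k n : ℤ} (hkn : k ≤ n) :
    ν.map (fun s => (past k s, s n)) = ν.map (fun s => (past 0 s, s 0)) := by
  have shift_injective : Injective fun z : ℤ => if z < 0 then z + k else z + n := by
    intro a b hab
    dsimp only at hab
    split_ifs at hab <;> omega
  conv_rhs => rw [← (hν _ shift_injective).map_eq, Measure.map_map (by fun_prop) (by fun_prop)]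
  congr 1
  ext s j
  · simp only [past, Function.comp_apply]
    rw [if_pos (by omega)]
    congr 1
    omega
  · simp

variable [StandardBorelSpace E] [Nonempty E]

/-- The random measure directing an exchangeable two-sided sequence: the conditional law of the
member with index `0` given the members with negative index. -/
def directingMeasure (ν : Measure (ℤ → E)) [IsFiniteMeasure ν] (s : ℤ → E) : Measure E :=
  condDistrib (fun s : ℤ → E => s 0) (past 0) ν (past 0 s)

theorem measurable_directingMeasure_comap_past [IsFiniteMeasure ν] :
    Measurable[MeasurableSpace.comap (past 0) inferInstance] (directingMeasure ν) :=
  (Kernel.measurable _).comp (comap_measurable _)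

theorem measurable_directingMeasure [IsFiniteMeasure ν] : Measurable (directingMeasure ν) :=
  (Kernel.measurable _).comp (measurable_past 0)

instance [IsFiniteMeasure ν] (s : ℤ → E) : IsProbabilityMeasure (directingMeasure ν s) := by
  unfold directingMeasure
  infer_instance

theorem IsExchangeable.condExp_past_zero [IsFiniteMeasure ν] (hν : IsExchangeable ν) {n : ℤ}
    (hn : 0 ≤ n) {f : E → ℝ} (hf : Measurable f) (hfn : Integrable (fun s => f (s n)) ν) :
    ν[fun s => f (s n) | MeasurableSpace.comap (past 0) inferInstance] =ᵐ[ν]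
      fun s => ∫ x, f x ∂(directingMeasure ν s) := by
  have condDistrib_eq : condDistrib (fun s : ℤ → E => s n) (past 0) ν =
      condDistrib (fun s => s 0) (past 0) ν := by
    simp only [condDistrib, hν.map_past_prodMk hn]
  simp only [directingMeasure, ← condDistrib_eq]
  exact condExp_ae_eq_integral_condDistrib (measurable_past 0)
    (measurable_pi_apply n).aemeasurable hf.stronglyMeasurable hfn

theorem IsExchangeable.isSampleFrom_directingMeasure [IsProbabilityMeasure ν]
    (hν : IsExchangeable ν) :
    IsSampleFrom ν (directingMeasure ν) (fun n s => s n) := by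
  intro n f hf hf_bdd
  have memLp_top (i : Fin n) : MemLp (fun s : ℤ → E => f i (s i)) ⊤ ν :=
    memLp_top_comp_of_bounded (hf i) (hf_bdd i) (measurable_pi_apply _)
  have condExp_past (i : Fin n) :
      ν[fun s => f i (s i) | MeasurableSpace.comap (past i) inferInstance] =ᵐ[ν]
        ν[fun s => f i (s i) | MeasurableSpace.comap (past 0) inferInstance] :=
    condExp_comap_ae_eq_of_map_prodMk_eq (measurable_pi_apply _) (measurable_past 0)
      (measurable_past i) (comap_past_mono (by omega))
      ((hν.map_past_prodMk le_rfl).trans (hν.map_past_prodMk (by omega)).symm) (hf i)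
      ((memLp_top i).mono_exponent le_top)
  have condExp_prod := condExp_prod_ae_eq_prod_condExp (measurable_past 0).comap_le
    (fun i : Fin n => comap_past_mono (by omega)) (fun i : Fin n => (measurable_past i).comap_le)
    memLp_top (fun i j hij => ((hf i).comp
      (measurable_eval_comap_past (by exact_mod_cast hij))).stronglyMeasurable) condExp_past
  refine condExp_ae_eq_of_le_of_condExp_ae_eq
    (Measurable.comap_le measurable_directingMeasure_comap_past) (measurable_past 0).comap_le
    (measurable_prod_integral_comap hf _).stronglyMeasurable ?_
  have condExp_eval := ae_all_iff.2 fun i : Fin n =>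
    hν.condExp_past_zero (by omega) (hf i) ((memLp_top i).integrable le_top)
  filter_upwards [condExp_prod, condExp_eval] with s hs_prod hs_eval
  simpa [Finset.prod_fn, hs_eval] using hs_prod

end DeFinetti

section GramArrays

universe u

variable {ι : Type u}

theorem posSemidef_of_forall_fin {r : ℕ → ℕ → ℝ}
    (h : ∀ n : ℕ, (Matrix.of fun l l' : Fin n => r l l').PosSemidef) :
    (Matrix.of r).PosSemidef := by
  refine ⟨Matrix.IsHermitian.ext fun i j => ?_, fun x => ?_⟩
  · exact (h (max i j + 1)).1.apply ⟨i, by omega⟩ ⟨j, by omega⟩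
  · obtain ⟨n, hn⟩ := x.support.exists_nat_subset_range
    have x_eq : Finsupp.embDomain Fin.valEmbedding (x.comapDomain Fin.val
        (Fin.val_injective (n := n)).injOn) = x :=
      Finsupp.embDomain_comapDomain fun i hi => ⟨⟨i, Finset.mem_range.1 (hn hi)⟩, rfl⟩
    rw [← x_eq]
    simp only [Finsupp.sum_embDomain]
    exact (h n).2 _

theorem isClosed_setOf_posSemidef :
    IsClosed {r : ι → ι → ℝ | (Matrix.of r).PosSemidef} := by
  simp only [Matrix.PosSemidef, Matrix.IsHermitian.ext_iff, Set.ofPred_and,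
    Set.ofPred_forall, Finsupp.sum]
  refine .inter (isClosed_iInter fun i => isClosed_iInter fun j => isClosed_eq ?_ ?_)
    (isClosed_iInter fun x => isClosed_le ?_ ?_)
  all_goals fun_prop [Matrix.of_apply]

theorem isClosed_setOf_diag_eq_one : IsClosed {r : ι → ι → ℝ | ∀ i, r i i = 1} := by
  simp only [Set.ofPred_forall]
  exact isClosed_iInter fun i => isClosed_eq (by fun_prop) (by fun_prop)

theorem exists_inner_eq_of_posSemidef {r : ι → ι → ℝ} (hr : (Matrix.of r).PosSemidef) :
    ∃ (H : Type u) (_ : NormedAddCommGroup H) (_ : InnerProductSpace ℝ H) (v : ι → H),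
      ∀ i j, r i j = ⟪v i, v j⟫ := by
  set K : Matrix ι ι (ℝ →L[ℝ] ℝ) := Matrix.of fun i j => r i j • 1
  have hK : K.PosSemidef := by
    refine ((RKHS.posSemidef_tfae (K := K)).out 0 2 rfl rfl).2
      ⟨Matrix.IsHermitian.ext fun i j => ?_, fun x => ?_⟩
    · simpa [K] using hr.1.apply i j
    · have quadraticForm_nonneg := hr.2 x
      rw [Finsupp.sum_comm] at quadraticForm_nonneg
      simpa [K, mul_assoc, mul_left_comm, mul_comm] using quadraticForm_nonneg
  have : Fact K.PosSemidef := ⟨hK⟩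
  refine ⟨RKHS.OfKernel K, inferInstance, inferInstance,
    fun i => RKHS.kerFun (RKHS.OfKernel K) i 1, fun i j => ?_⟩
  rw [real_inner_comm, ← RKHS.kernel_inner]
  simp [RKHS.OfKernel.kernel_ofKernel, K]

/-- The Schur complement of the array `r` with respect to its pivot entry `r e e`: if `r` is the
array of inner products of a family of vectors, this is the array of inner products of their
projections to the orthogonal complement of the vector with index `e`. A vanishing pivot leaves `r`
unchanged, since `x / 0 = 0`. -/
def schurComplement (r : ι → ι → ℝ) (e : ι) : ι → ι → ℝ :=
  fun i j => r i j - r i e * r j e / r e e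

theorem exists_inner_eq_schurComplement {H : Type*} [NormedAddCommGroup H] [InnerProductSpace ℝ H]
    {r : ι → ι → ℝ} {v : ι → H} (hr : ∀ i j, r i j = ⟪v i, v j⟫) (e : ι) :
    ∃ w : ι → H, ∀ i j, schurComplement r e i j = ⟪w i, w j⟫ := by
  refine ⟨fun i => v i - (⟪v i, v e⟫ / ⟪v e, v e⟫) • v e, fun i j => ?_⟩
  simp only [schurComplement, hr, inner_sub_left, inner_sub_right, real_inner_smul_left,
    real_inner_smul_right, real_inner_comm (v j) (v e)]
  obtain he | he := eq_or_ne ⟪v e, v e⟫ 0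
  · simp [inner_self_eq_zero.1 he]
  · field_simp
    ring

/-- The array `r` after successive elimination of the pivots `e 0, …, e (n - 1)`. -/
def residualArray (r : ι → ι → ℝ) (e : ℕ → ι) : ℕ → ι → ι → ℝ
  | 0 => r
  | n + 1 => schurComplement (residualArray r e n) (e n)

/-- The `n`-th coordinate of the vector with index `i` in the orthonormal system obtained from the
vectors with indices `e 0, e 1, …` by the Gram–Schmidt process. It is `0` if the `n`-th of these
vectors is a linear combination of the previous ones, since `x / 0 = 0`. -/
def gramSchmidtCoeff (r : ι → ι → ℝ) (e : ℕ → ι) (n : ℕ) (i : ι) : ℝ :=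
  residualArray r e n i (e n) / √(residualArray r e n (e n) (e n))

@[fun_prop]
theorem measurable_residualArray (e : ℕ → ι) (n : ℕ) (i j : ι) :
    Measurable fun r => residualArray r e n i j := by
  induction n generalizing i j with
  | zero => simp only [residualArray]; fun_prop
  | succ n ih => simp only [residualArray, schurComplement]; fun_prop

@[fun_prop]
theorem measurable_gramSchmidtCoeff (e : ℕ → ι) (n : ℕ) (i : ι) :
    Measurable fun r => gramSchmidtCoeff r e n i := by
  unfold gramSchmidtCoeff
  fun_prop

theorem residualArray_onFun (r : ι → ι → ℝ) (e : ℕ → ι) {φ : ι → ι} {n : ℕ}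
    (hφ : ∀ k < n, φ (e k) = e k) (i j : ι) :
    residualArray (onFun r φ) e n i j = residualArray r e n (φ i) (φ j) := by
  induction n generalizing i j with
  | zero => rfl
  | succ n ih =>
    simp only [residualArray, schurComplement, ih fun k hk => hφ k (hk.trans n.lt_succ_self),
      hφ n n.lt_succ_self]

variable {r : ι → ι → ℝ}

theorem exists_inner_eq_residualArray (hr : (Matrix.of r).PosSemidef) (e : ℕ → ι) (n : ℕ) :
    ∃ (H : Type u) (_ : NormedAddCommGroup H) (_ : InnerProductSpace ℝ H) (v : ι → H),
      ∀ i j, residualArray r e n i j = ⟪v i, v j⟫ := by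
  induction n with
  | zero => exact exists_inner_eq_of_posSemidef hr
  | succ n ih =>
    obtain ⟨H, _, _, v, hv⟩ := ih
    exact ⟨H, _, _, exists_inner_eq_schurComplement hv (e n)⟩

theorem residualArray_self_nonneg (hr : (Matrix.of r).PosSemidef) (e : ℕ → ι) (n : ℕ) (i : ι) :
    0 ≤ residualArray r e n i i := by
  obtain ⟨H, _, _, v, hv⟩ := exists_inner_eq_residualArray hr e n
  rw [hv]
  exact real_inner_self_nonneg

theorem residualArray_sq_le (hr : (Matrix.of r).PosSemidef) (e : ℕ → ι) (n : ℕ) (i j : ι) :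
    residualArray r e n i j ^ 2 ≤ residualArray r e n i i * residualArray r e n j j := by
  obtain ⟨H, _, _, v, hv⟩ := exists_inner_eq_residualArray hr e n
  rw [hv, hv, hv, sq]
  exact real_inner_mul_inner_self_le _ _

theorem residualArray_eq_sub_sum (hr : (Matrix.of r).PosSemidef) (e : ℕ → ι) (n : ℕ) (i j : ι) :
    residualArray r e n i j =
      r i j - ∑ k ∈ Finset.range n, gramSchmidtCoeff r e k i * gramSchmidtCoeff r e k j := by
  induction n with
  | zero => simp [residualArray]
  | succ n ih =>
    rw [Finset.sum_range_succ, ← sub_sub, ← ih, gramSchmidtCoeff, gramSchmidtCoeff,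
      div_mul_div_comm, Real.mul_self_sqrt (residualArray_self_nonneg hr e n _), residualArray,
      schurComplement]

theorem sum_gramSchmidtCoeff_sq_le (hr : (Matrix.of r).PosSemidef) (e : ℕ → ι) (n : ℕ) (i : ι) :
    ∑ k ∈ Finset.range n, gramSchmidtCoeff r e k i ^ 2 ≤ r i i := by
  simpa only [residualArray_eq_sub_sum hr, sub_nonneg, ← sq]
    using residualArray_self_nonneg hr e n i

theorem residualArray_self_le (hr : (Matrix.of r).PosSemidef) (e : ℕ → ι) (n : ℕ) (i : ι) :
    residualArray r e n i i ≤ r i i := by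
  rw [residualArray_eq_sub_sum hr]
  exact sub_le_self _ (Finset.sum_nonneg fun k _ => mul_self_nonneg _)

theorem residualArray_sq_le_div_sqrt_sq (hr : (Matrix.of r).PosSemidef) (e : ℕ → ι) (n : ℕ) (i : ι)
    {j : ι} (hj : r j j ≤ 1) :
    residualArray r e n i j ^ 2 ≤ (residualArray r e n i j / √(residualArray r e n j j)) ^ 2 := by
  have nonneg := residualArray_self_nonneg hr e n j
  obtain hzero | hpos := nonneg.eq_or_lt
  · simpa [← hzero] using residualArray_sq_le hr e n i j
  · rw [div_pow, Real.sq_sqrt nonneg]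
    exact le_div_self (sq_nonneg _) hpos ((residualArray_self_le hr e n j).trans hj)

end GramArrays

section UnitBall

theorem dense_span_range_single :
    Dense (Submodule.span ℝ (Set.range fun k : ℕ => (lp.single 2 k 1 : ell2)) : Set ell2) := by
  intro x
  refine mem_closure_of_tendsto (lp.hasSum_single (by simp) x).tendsto_sum_nat
    (Eventually.of_forall fun n => Submodule.sum_mem _ fun k _ => ?_)
  have single_eq_smul : (lp.single 2 k (x k) : ell2) = x k • lp.single 2 k 1 := by
    rw [← lp.single_smul, smul_eq_mul, mul_one]
  rw [single_eq_smul]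
  exact Submodule.smul_mem _ _ (Submodule.subset_span ⟨k, rfl⟩)

instance : TopologicalSpace.SeparableSpace ell2 := by
  rw [← TopologicalSpace.isSeparable_univ_iff, ← dense_span_range_single.closure_eq]
  exact (Set.countable_range _).isSeparable.span.closure

/-- The closed unit ball of `ℓ²`, as a type. -/
abbrev Ell2UnitBall : Type := ↥(Metric.closedBall (0 : ell2) 1)

instance : PolishSpace Ell2UnitBall := Metric.isClosed_closedBall.polishSpace

instance : Nonempty Ell2UnitBall := ⟨0, Metric.mem_closedBall_self zero_le_one⟩

theorem map_coe_unitBall_norm_le_one (ν : Measure Ell2UnitBall) [IsProbabilityMeasure ν] :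
    ν.map Subtype.val {h : ell2 | ‖h‖ ≤ 1} = 1 := by
  rw [Measure.map_apply measurable_subtype_coe
    (isClosed_le continuous_norm continuous_const).measurableSet]
  exact (congrArg ν (Set.eq_univ_of_forall fun h => mem_closedBall_zero_iff.1 h.2)).trans
    measure_univ

theorem measurableEmbedding_unitBall_coord :
    MeasurableEmbedding fun (h : Ell2UnitBall) (n : ℕ) => (h : ell2) n :=
  Continuous.measurableEmbedding (lp.uniformContinuous_coe.continuous.comp continuous_subtype_val)
    fun _ _ hgh => Subtype.ext (lp.ext hgh)

/-- The point of the unit ball of `ℓ²` with the given sequence of coordinates, and an arbitrary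
point if there is none. -/
def unitBallMk : (ℕ → ℝ) → Ell2UnitBall :=
  Function.extend (fun (h : Ell2UnitBall) n => (h : ell2) n) id fun _ => Classical.arbitrary _

@[fun_prop]
theorem measurable_unitBallMk : Measurable unitBallMk :=
  measurableEmbedding_unitBall_coord.measurable_extend measurable_id measurable_const

theorem unitBallMk_apply {c : ℕ → ℝ} (hc : ∀ n, ∑ k ∈ Finset.range n, c k ^ 2 ≤ 1) (n : ℕ) :
    (unitBallMk c : ell2) n = c n := by
  have summable_sq : Summable fun k => c k ^ 2 :=
    summable_of_sum_range_le (fun k => sq_nonneg (c k)) hc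
  have tsum_sq_le : ∑' k, c k ^ 2 ≤ 1 :=
    Real.tsum_le_of_sum_range_le (fun k => sq_nonneg (c k)) hc
  have memℓp : Memℓp c 2 := memℓp_gen (by simpa using summable_sq)
  have norm_le : ‖(⟨c, memℓp⟩ : ell2)‖ ≤ 1 :=
    lp.norm_le_of_tsum_le (by simp) zero_le_one (by simpa using tsum_sq_le)
  have extend_eq := measurableEmbedding_unitBall_coord.injective.extend_apply id
    (fun _ => Classical.arbitrary _) ⟨⟨c, memℓp⟩, mem_closedBall_zero_iff.2 norm_le⟩
  exact congrArg (fun h : Ell2UnitBall => (h : ell2) n) extend_eq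

/-- The vector with index `i` of an array of inner products, projected to the closed span of the
vectors with indices `e 0, e 1, …` and expressed in the coordinates `gramSchmidtCoeff`. The
array is meant to be positive semidefinite with diagonal entries at most `1`, which makes the
coordinate sequence one of norm at most `1`. -/
def gramPoint {ι : Type*} (r : ι → ι → ℝ) (e : ℕ → ι) (i : ι) : Ell2UnitBall :=
  unitBallMk fun n => gramSchmidtCoeff r e n i

variable {ι : Type*}

@[fun_prop]
theorem measurable_gramPoint (e : ℕ → ι) (i : ι) : Measurable fun r => gramPoint r e i := by
  unfold gramPoint
  fun_prop

theorem gramPoint_onFun (r : ι → ι → ℝ) {e : ℕ → ι} {φ : ι → ι} (hφ : ∀ n, φ (e n) = e n)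
    (i : ι) : gramPoint (onFun r φ) e i = gramPoint r e (φ i) := by
  simp only [gramPoint, gramSchmidtCoeff, residualArray_onFun r e fun k _ => hφ k, hφ]

theorem tendsto_residualArray {r : ι → ι → ℝ} (hr : (Matrix.of r).PosSemidef)
    (hr_diag : ∀ i, r i i ≤ 1) (e : ℕ → ι) (i j : ι) :
    Tendsto (fun n => residualArray r e n i j) atTop
      (nhds (r i j - ⟪(gramPoint r e i : ell2), gramPoint r e j⟫)) := by
  have coord (i : ι) (n : ℕ) : (gramPoint r e i : ell2) n = gramSchmidtCoeff r e n i :=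
    unitBallMk_apply (fun n => (sum_gramSchmidtCoeff_sq_le hr e n i).trans (hr_diag i)) n
  have hasSum_inner := lp.hasSum_inner (𝕜 := ℝ) (gramPoint r e i : ell2) (gramPoint r e j)
  simpa [residualArray_eq_sub_sum hr, coord, mul_comm] using
    hasSum_inner.tendsto_sum_nat.const_sub (r i j)

end UnitBall

section OffDiagonal

open scoped ENNReal

variable {ι : Type*} {μ : Measure (ι → ι → ℝ)} {e : ℕ → ι} {i j : ι}

/- Exchanging `j` with the pivot `e n` turns `gramSchmidtCoeff r e n i` into the quotient of
`residualArray r e n i j` by the norm of a vector of the unit ball. -/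
theorem lintegral_residualArray_sq_le (hμ : IsWeaklyExchangeable μ)
    (hpsd : ∀ᵐ r ∂μ, (Matrix.of r).PosSemidef) (hdiag : ∀ᵐ r ∂μ, ∀ i, r i i ≤ 1)
    (he : Injective e) (hi : i ∉ Set.range e) (hj : j ∉ Set.range e) (hij : i ≠ j) (n : ℕ) :
    ∫⁻ r, .ofReal (residualArray r e n i j ^ 2) ∂μ ≤
      ∫⁻ r, .ofReal (gramSchmidtCoeff r e n i ^ 2) ∂μ := by
  classical
  set φ := Equiv.swap (e n) j
  have fix_pivots (k : ℕ) (hk : k < n) : φ (e k) = e k :=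
    Equiv.swap_apply_of_ne_of_ne (he.ne hk.ne) fun h => hj ⟨k, h⟩
  have fix_i : φ i = i := Equiv.swap_apply_of_ne_of_ne (fun h => hi ⟨n, h.symm⟩) hij
  have coeff_onFun (r : ι → ι → ℝ) : gramSchmidtCoeff (onFun r φ) e n i =
      residualArray r e n i j / √(residualArray r e n j j) := by
    rw [gramSchmidtCoeff, residualArray_onFun r e fix_pivots, residualArray_onFun r e fix_pivots,
      fix_i, Equiv.swap_apply_left]
  calc ∫⁻ r, .ofReal (residualArray r e n i j ^ 2) ∂μ
      ≤ ∫⁻ r, .ofReal (gramSchmidtCoeff (onFun r φ) e n i ^ 2) ∂μ := by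
        refine lintegral_mono_ae ?_
        filter_upwards [hpsd, hdiag] with r hr hr_diag
        rw [coeff_onFun]
        exact ENNReal.ofReal_le_ofReal (residualArray_sq_le_div_sqrt_sq hr e n i (hr_diag j))
    _ = ∫⁻ r, .ofReal (gramSchmidtCoeff r e n i ^ 2) ∂μ :=
        (hμ φ φ.injective).lintegral_comp
          (f := fun r => .ofReal (gramSchmidtCoeff r e n i ^ 2)) (by fun_prop)

theorem tsum_lintegral_gramSchmidtCoeff_sq_le (hpsd : ∀ᵐ r ∂μ, (Matrix.of r).PosSemidef)
    (hdiag : ∀ᵐ r ∂μ, ∀ i, r i i ≤ 1) :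
    ∑' n, ∫⁻ r, .ofReal (gramSchmidtCoeff r e n i ^ 2) ∂μ ≤ μ Set.univ := by
  rw [← lintegral_tsum fun n => by fun_prop, ← lintegral_one]
  refine lintegral_mono_ae ?_
  filter_upwards [hpsd, hdiag] with r hr hr_diag
  refine ENNReal.tsum_le_of_sum_range_le fun n => ?_
  rw [← ENNReal.ofReal_sum_of_nonneg fun k _ => sq_nonneg _, ENNReal.ofReal_le_one]
  exact (sum_gramSchmidtCoeff_sq_le hr e n i).trans (hr_diag i)

theorem ae_tendsto_residualArray_zero [IsFiniteMeasure μ] (hμ : IsWeaklyExchangeable μ)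
    (hpsd : ∀ᵐ r ∂μ, (Matrix.of r).PosSemidef) (hdiag : ∀ᵐ r ∂μ, ∀ i, r i i ≤ 1)
    (he : Injective e) (hi : i ∉ Set.range e) (hj : j ∉ Set.range e) (hij : i ≠ j) :
    ∀ᵐ r ∂μ, Tendsto (fun n => residualArray r e n i j) atTop (nhds 0) := by
  have lintegral_tsum_ne_top : ∫⁻ r, ∑' n, .ofReal (residualArray r e n i j ^ 2) ∂μ ≠ ∞ := by
    rw [lintegral_tsum fun n => by fun_prop]
    exact ne_top_of_le_ne_top (measure_ne_top μ Set.univ) <|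
      (ENNReal.tsum_le_tsum (lintegral_residualArray_sq_le hμ hpsd hdiag he hi hj hij)).trans
        (tsum_lintegral_gramSchmidtCoeff_sq_le hpsd hdiag)
  filter_upwards [ae_lt_top (by fun_prop) lintegral_tsum_ne_top] with r hr
  have sq_tendsto := (ENNReal.tendsto_toReal ENNReal.zero_ne_top).comp
    (ENNReal.tendsto_atTop_zero_of_tsum_ne_top hr.ne)
  rw [tendsto_zero_iff_abs_tendsto_zero]
  simpa [Function.comp_def, ENNReal.toReal_ofReal, sq_nonneg, Real.sqrt_sq_eq_abs]
    using sq_tendsto.sqrt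

theorem ae_eq_inner_gramPoint [IsFiniteMeasure μ] (hμ : IsWeaklyExchangeable μ)
    (hpsd : ∀ᵐ r ∂μ, (Matrix.of r).PosSemidef) (hdiag : ∀ᵐ r ∂μ, ∀ i, r i i ≤ 1)
    (he : Injective e) (hi : i ∉ Set.range e) (hj : j ∉ Set.range e) (hij : i ≠ j) :
    ∀ᵐ r ∂μ, r i j = ⟪(gramPoint r e i : ell2), gramPoint r e j⟫ := by
  filter_upwards [hpsd, hdiag, ae_tendsto_residualArray_zero hμ hpsd hdiag he hi hj hij]
    with r hr hr_diag h_tendsto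
  exact sub_eq_zero.1 (tendsto_nhds_unique (tendsto_residualArray hr hr_diag e i j) h_tendsto)

end OffDiagonal

section Representation

variable {κ : Type*}

/-- The array of inner products of a family of vectors with its diagonal entries replaced by `1`. -/
def gramArray [DecidableEq κ] (h : κ → ell2) (l l' : κ) : ℝ :=
  ⟪h l, h l'⟫ + if l = l' then 1 - ‖h l‖ ^ 2 else 0

theorem gramArray_self [DecidableEq κ] (h : κ → ell2) (l : κ) : gramArray h l l = 1 := by
  simp [gramArray]

theorem gramArray_of_ne [DecidableEq κ] (h : κ → ell2) {l l' : κ} (hl : l ≠ l') :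
    gramArray h l l' = ⟪h l, h l'⟫ := by
  simp [gramArray, hl]

@[fun_prop]
theorem measurable_gramArray [DecidableEq κ] :
    Measurable (gramArray : (κ → ell2) → κ → κ → ℝ) := by
  refine measurable_pi_iff.2 fun l => measurable_pi_iff.2 fun l' => ?_
  obtain rfl | hl := eq_or_ne l l'
  · simp only [gramArray_self, measurable_const]
  · simp only [gramArray_of_ne _ hl]
    fun_prop

/-- The points of the unit ball representing the indices `Sum.inr k`, where the indices `Sum.inl n`
serve as pivots. -/
def gramPoints (r : ℕ ⊕ κ → ℕ ⊕ κ → ℝ) (k : κ) : Ell2UnitBall :=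
  gramPoint r Sum.inl (Sum.inr k)

@[fun_prop]
theorem measurable_gramPoints : Measurable (gramPoints (κ := κ)) :=
  measurable_pi_iff.2 fun _ => measurable_gramPoint _ _

variable {μ : Measure (ℕ ⊕ κ → ℕ ⊕ κ → ℝ)}

theorem IsWeaklyExchangeable.isExchangeable_map_gramPoints (hμ : IsWeaklyExchangeable μ) :
    IsExchangeable (μ.map gramPoints) := by
  intro φ hφ
  refine ⟨by fun_prop, ?_⟩
  have lift_injective : Injective (Sum.map (id : ℕ → ℕ) φ) := Function.injective_id.sumMap hφ
  have gramPoints_onFun (r : ℕ ⊕ κ → ℕ ⊕ κ → ℝ) :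
      gramPoints (onFun r (Sum.map id φ)) = gramPoints r ∘ φ := by
    ext1 k
    exact gramPoint_onFun r (fun _ => rfl) (Sum.inr k)
  calc (μ.map gramPoints).map (fun s => s ∘ φ)
      = (μ.map fun r => onFun r (Sum.map id φ)).map gramPoints := by
        rw [Measure.map_map (by fun_prop) (by fun_prop),
          Measure.map_map (by fun_prop) (measurable_onFun _)]
        simp only [Function.comp_def, gramPoints_onFun]
    _ = μ.map gramPoints := by rw [(hμ _ lift_injective).map_eq]

theorem ae_onFun_inr_eq_gramArray_gramPoints [Countable κ] [DecidableEq κ] [IsFiniteMeasure μ]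
    (hμ : IsWeaklyExchangeable μ) (hpsd : ∀ᵐ r ∂μ, (Matrix.of r).PosSemidef)
    (hdiag : ∀ᵐ r ∂μ, ∀ i, r i i = 1) :
    ∀ᵐ r ∂μ, onFun r Sum.inr = gramArray fun k => (gramPoints r k : ell2) := by
  have off_diagonal (k k' : κ) : ∀ᵐ r ∂μ, k ≠ k' →
      r (Sum.inr k) (Sum.inr k') = ⟪(gramPoints r k : ell2), gramPoints r k'⟫ := by
    by_cases hk : k = k'
    · simp [hk]
    filter_upwards [ae_eq_inner_gramPoint hμ hpsd (hdiag.mono fun r hr i => (hr i).le)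
      Sum.inl_injective (i := Sum.inr k) (j := Sum.inr k') (by simp) (by simp) (by simpa)]
      with r hr _ using hr
  filter_upwards [hdiag, ae_all_iff.2 fun k => ae_all_iff.2 (off_diagonal k)] with r hr_diag hr
  ext k k'
  obtain rfl | hk := eq_or_ne k k'
  · rw [gramArray_self, onFun, hr_diag]
  · rw [gramArray_of_ne _ hk, onFun, hr k k' hk]

theorem exists_isExchangeable_map_gramArray_eq {μ : Measure (ℕ → ℕ → ℝ)} [IsProbabilityMeasure μ]
    (hμ : IsWeaklyExchangeable μ) (hpsd : ∀ᵐ r ∂μ, (Matrix.of r).PosSemidef)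
    (hdiag : ∀ᵐ r ∂μ, ∀ l, r l l = 1) :
    ∃ ν : Measure (ℤ → Ell2UnitBall), IsProbabilityMeasure ν ∧ IsExchangeable ν ∧
      ν.map (fun s => gramArray fun l : ℕ => (s l : ell2)) = μ := by
  obtain ⟨e⟩ : Nonempty (ℕ ⊕ ℤ ≃ ℕ) := ⟨Denumerable.eqv _⟩
  set μ' := μ.map fun r => onFun r e
  have hμ' : IsWeaklyExchangeable μ' := hμ.map_onFun_equiv e
  have : IsProbabilityMeasure μ' :=
    Measure.isProbabilityMeasure_map (measurable_onFun _).aemeasurable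
  have hpsd' : ∀ᵐ r ∂μ', (Matrix.of r).PosSemidef :=
    (ae_map_iff (measurable_onFun _).aemeasurable isClosed_setOf_posSemidef.measurableSet).2
      (hpsd.mono fun r hr => hr.submatrix e)
  have hdiag' : ∀ᵐ r ∂μ', ∀ i, r i i = 1 :=
    (ae_map_iff (measurable_onFun _).aemeasurable isClosed_setOf_diag_eq_one.measurableSet).2
      (hdiag.mono fun r hr i => hr (e i))
  have sample_injective : Injective (e ∘ Sum.inr ∘ ((↑) : ℕ → ℤ)) :=
    e.injective.comp (Sum.inr_injective.comp Nat.cast_injective)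
  refine ⟨μ'.map gramPoints, Measure.isProbabilityMeasure_map (by fun_prop),
    hμ'.isExchangeable_map_gramPoints, ?_⟩
  calc (μ'.map gramPoints).map (fun s => gramArray fun l : ℕ => (s l : ell2))
      = μ'.map (fun r => onFun r (Sum.inr ∘ ((↑) : ℕ → ℤ))) := by
        rw [Measure.map_map (by fun_prop) (by fun_prop)]
        refine Measure.map_congr ?_
        filter_upwards [ae_onFun_inr_eq_gramArray_gramPoints hμ' hpsd' hdiag'] with r hr
        ext l l'
        simpa [gramArray, onFun] using (congrFun₂ hr l l').symm
    _ = μ.map (fun r => onFun r (e ∘ Sum.inr ∘ ((↑) : ℕ → ℤ))) :=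
        Measure.map_map (measurable_onFun _) (measurable_onFun _)
    _ = μ := (hμ _ sample_injective).map_eq

end Representation

/-- The Dovbysh–Sudakov representation: a Gram–de Finetti array with unit diagonal is
generated by an i.i.d. sample from a random probability measure on the unit ball of a
separable Hilbert space. -/
theorem dovbysh_sudakov {Ω : Type} [MeasurableSpace Ω] (P : Measure Ω)
    [IsProbabilityMeasure P]
    (R : ℕ → ℕ → Ω → ℝ) (hR_meas : ∀ l l', Measurable (R l l'))
    -- unit diagonal and symmetry
    (hdiag : ∀ l ω, R l l ω = 1) (hsymm : ∀ l l' ω, R l l' ω = R l' l ω)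
    -- every finite principal submatrix is positive semidefinite almost surely
    (hpsd : ∀ n : ℕ, ∀ᵐ ω ∂P,
      (Matrix.of fun l l' : Fin n => R (l : ℕ) (l' : ℕ) ω).PosSemidef)
    -- weak exchangeability: invariance under permutations of finitely many indices
    (hexch : ∀ perm : Equiv.Perm ℕ, {l | perm l ≠ l}.Finite →
      Measure.map (fun ω => fun l l' : ℕ => R (perm l) (perm l') ω) P =
        Measure.map (fun ω => fun l l' : ℕ => R l l' ω) P) :
    ∃ (Ω' : Type) (_ : MeasurableSpace Ω') (P' : Measure Ω') (_ : IsProbabilityMeasure P')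
      (G : Ω' → Measure ell2) (ρ : ℕ → Ω' → ell2),
      Measurable G ∧ (∀ l, Measurable (ρ l)) ∧
      -- `G` is a random probability measure on the unit ball
      (∀ ω, IsProbabilityMeasure (G ω)) ∧
      (∀ ω, G ω {h : ell2 | ‖h‖ ≤ 1} = 1) ∧
      -- conditionally on `G`, the sequence `(ρ^l)` is i.i.d. with law `G`
      (∀ (n : ℕ) (f : Fin n → ell2 → ℝ), (∀ i, Measurable (f i)) →
        (∀ i, ∃ C, ∀ h, |f i h| ≤ C) →
        (P'[fun ω => ∏ i, f i (ρ i ω)|MeasurableSpace.comap G inferInstance]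
          =ᵐ[P'] fun ω => ∏ i, ∫ h, f i h ∂(G ω))) ∧
      -- the array is generated by the sample `(ρ^l)` in distribution
      Measure.map (fun ω => fun l l' : ℕ => R l l' ω) P =
        Measure.map (fun ω => fun l l' : ℕ =>
          ⟪ρ l ω, ρ l' ω⟫ + if l = l' then 1 - ‖ρ l ω‖ ^ 2 else 0) P' := by
  have hR : Measurable fun ω l l' => R l l' ω := by fun_prop
  set μ := P.map fun ω l l' => R l l' ω
  have : IsProbabilityMeasure μ := Measure.isProbabilityMeasure_map hR.aemeasurable
  have hμ : IsWeaklyExchangeable μ := isWeaklyExchangeable_of_perm fun σ hσ => by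
    rw [Measure.map_map (measurable_onFun _) hR]
    exact hexch σ hσ
  have hμ_psd : ∀ᵐ r ∂μ, (Matrix.of r).PosSemidef :=
    (ae_map_iff hR.aemeasurable isClosed_setOf_posSemidef.measurableSet).2
      ((ae_all_iff.2 hpsd).mono fun ω hω => posSemidef_of_forall_fin hω)
  have hμ_diag : ∀ᵐ r ∂μ, ∀ l, r l l = 1 :=
    (ae_map_iff hR.aemeasurable isClosed_setOf_diag_eq_one.measurableSet).2
      (ae_of_all _ fun ω l => hdiag l ω)
  obtain ⟨ν, _, hν, hν_map⟩ := exists_isExchangeable_map_gramArray_eq hμ hμ_psd hμ_diag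
  have coe_measurable : Measurable ((↑) : Ell2UnitBall → ell2) := measurable_subtype_coe
  refine ⟨ℤ → Ell2UnitBall, inferInstance, ν, inferInstance,
    fun s => (directingMeasure ν s).map Subtype.val, fun l s => s l,
    (Measure.measurable_map _ coe_measurable).comp measurable_directingMeasure, by fun_prop,
    fun s => Measure.isProbabilityMeasure_map coe_measurable.aemeasurable,
    fun s => map_coe_unitBall_norm_le_one _,
    hν.isSampleFrom_directingMeasure.map measurable_directingMeasure coe_measurable, hν_map.symm⟩
end
end

section
/- Let n ≥ 1 and let R be a symmetric n×n real matrix with R_{l,l} = 1 and |R_{l,l'}| ≤ 1 for all l, l', satisfying the ultrametric inequality R_{l,l'} ≥ min(R_{l,l''}, R_{l',l''}) for all l, l', l''. Then for every q ∈ ℝ, the n×n matrix A with entries A_{l,l'} = 1 if q ≤ R_{l,l'} and A_{l,l'} = 0 otherwise is symmetric positive semidefinite. -/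
/-!
The relation `q ≤ R l l'` is symmetric and, by the ultrametric inequality, transitive. For such a
relation `r`, not necessarily reflexive, `r i j` holds exactly when `i` and `j` have the same
nonempty set of related indices, so the indicator matrix of `r` is the pullback, along
`i ↦ {k | r i k}`, of a diagonal matrix with entries `0` and `1`.
-/

section PartialEquivalence

variable {ι : Type*} (r : ι → ι → Prop) [Std.Symm r] [IsTrans ι r]

theorem rel_iff_setOf_rel_eq_and_nonempty (i j : ι) :
    r i j ↔ {k | r i k} = {k | r j k} ∧ {k | r i k}.Nonempty := by
  constructor
  · intro hij
    have hji : r j i := symm_of r hij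
    exact ⟨Set.ext fun k => ⟨trans_of r hji, trans_of r hij⟩, j, hij⟩
  · rintro ⟨heq, k, hik⟩
    have hjk : r j k := heq.subset hik
    exact trans_of r hik (symm_of r hjk)

theorem posSemidef_indicator_of_symm_of_isTrans (S : Type*) [Ring S] [PartialOrder S]
    [StarRing S] [StarOrderedRing S] [DecidableRel r] :
    (Matrix.of fun i j => if r i j then (1 : S) else 0).PosSemidef := by
  classical
  let d : Set ι → S := fun s => if s.Nonempty then 1 else 0
  have d_nonneg : 0 ≤ d := fun s => ite_nonneg zero_le_one le_rfl
  have indicator_eq_submatrix : (Matrix.of fun i j => if r i j then (1 : S) else 0) =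
      (Matrix.diagonal d).submatrix (fun i => {k | r i k}) (fun i => {k | r i k}) := by
    ext i j
    rw [Matrix.of_apply, Matrix.submatrix_apply, Matrix.diagonal_apply, ← ite_and]
    exact if_congr (rel_iff_setOf_rel_eq_and_nonempty r i j) rfl rfl
  rw [indicator_eq_submatrix]
  exact (Matrix.PosSemidef.diagonal d_nonneg).submatrix _

end PartialEquivalence

section Ultrametric

variable {ι α : Type*} {R : Matrix ι ι α}

theorem symm_le_apply_of_isSymm [LE α] (hsym : R.IsSymm) (q : α) :
    Std.Symm fun i j => q ≤ R i j where
  symm i j hij := by rwa [hsym.apply i j]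

variable [SemilatticeInf α]

theorem isTrans_le_apply_of_ultrametric (hsym : R.IsSymm)
    (hultra : ∀ i j k, R i k ⊓ R j k ≤ R i j) (q : α) :
    IsTrans ι fun i j => q ≤ R i j where
  trans i j k hij hjk := by
    have hkj : q ≤ R k j := hjk.trans_eq (hsym.apply k j)
    exact (le_inf hij hkj).trans (hultra i k j)

theorem indicator_matrix_posSemidef_general [DecidableLE α] (S : Type*) [Ring S] [PartialOrder S]
    [StarRing S] [StarOrderedRing S] (hsym : R.IsSymm)
    (hultra : ∀ i j k, R i k ⊓ R j k ≤ R i j) (q : α) :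
    (Matrix.of fun i j => if q ≤ R i j then (1 : S) else 0).PosSemidef :=
  have := symm_le_apply_of_isSymm hsym q
  have := isTrans_le_apply_of_ultrametric hsym hultra q
  let : DecidableRel fun i j => q ≤ R i j := fun _ _ => inferInstance
  posSemidef_indicator_of_symm_of_isTrans (fun i j => q ≤ R i j) S

end Ultrametric

/-- Under ultrametricity, the indicator matrix `A_{l,l'} = 1(q ≤ R_{l,l'})` is
symmetric positive semidefinite. -/
theorem indicator_matrix_posSemidef (n : ℕ) (hn : 1 ≤ n) (R : Matrix (Fin n) (Fin n) ℝ)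
    (hsym : R.IsSymm) (hdiag : ∀ l, R l l = 1) (hbdd : ∀ l l', |R l l'| ≤ 1)
    (hultra : ∀ l l' l'', min (R l l'') (R l' l'') ≤ R l l') (q : ℝ) :
    (Matrix.of fun l l' => if q ≤ R l l' then (1 : ℝ) else 0).PosSemidef :=
  indicator_matrix_posSemidef_general ℝ hsym hultra q
end

section
/- Let k ≥ 1 and define κ: [0,1] → [0,1] by κ(q) = j/k for j/k ≤ q < (j+1)/k, j = 0, …, k (so κ(1) = 1); equivalently κ(q) = Σ_{j=1}^{k} (1/k) 1(j/k ≤ q). Let n ≥ 1 and let R be a symmetric n×n real matrix with R_{l,l} = 1, entries in [0,1], satisfying the ultrametric inequality R_{l,l'} ≥ min(R_{l,l''}, R_{l',l''}) for all l, l', l''. Then the matrix (κ(R_{l,l'}))_{l,l'≤n} is symmetric positive semidefinite. -/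
/-- The discretization map `κ(q) = Σ_{j=1}^{k} (1/k) 1(j/k ≤ q)`, i.e. `κ(q) = j/k`
for `j/k ≤ q < (j+1)/k`. -/
noncomputable def kappa (k : ℕ) (q : ℝ) : ℝ :=
  ∑ j ∈ Finset.Icc 1 k, (k : ℝ)⁻¹ * (if (j : ℝ) / k ≤ q then 1 else 0)

section Indicator

variable {ι α A : Type*} [Ring A] [PartialOrder A] [StarRing A] [StarOrderedRing A]

theorem posSemidef_indicator_setoid (S : Setoid ι) [DecidableRel S] :
    (Matrix.of fun i j => if S i j then (1 : A) else 0).PosSemidef := by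
  classical
  -- The indicator is the identity matrix of the quotient, pulled back along the projection.
  have pullback_eq : (1 : Matrix (Quotient S) (Quotient S) A).submatrix
      (Quotient.mk S) (Quotient.mk S) = Matrix.of fun i j => if S i j then (1 : A) else 0 := by
    ext i j
    simp only [Matrix.submatrix_apply, Matrix.one_apply, Matrix.of_apply, Quotient.eq]
  exact pullback_eq ▸ Matrix.PosSemidef.one.submatrix (Quotient.mk S)

variable [SemilatticeInf α]

theorem le_swap_of_ultrametric {R : ι → ι → α} {t : α} {i j : ι} (hdiag : t ≤ R j j)
    (hultra : ∀ i j m, R i m ⊓ R j m ≤ R i j) (hij : t ≤ R i j) : t ≤ R j i :=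
  (le_inf hdiag hij).trans (hultra j i j)

/-- The partition of `ι` into clusters at level `t`: `i` and `j` are related when `t ≤ R i j`.
Here `R` is an overlap, so large values mean close points and the ultrametric inequality bounds `R`
from below. -/
def overlapSetoid (R : ι → ι → α) (t : α) (hdiag : ∀ i, t ≤ R i i)
    (hultra : ∀ i j m, R i m ⊓ R j m ≤ R i j) : Setoid ι where
  r i j := t ≤ R i j
  iseqv :=
    { refl := hdiag
      symm := le_swap_of_ultrametric (hdiag _) hultra
      trans {i m j} him hmj :=
        (le_inf him (le_swap_of_ultrametric (hdiag j) hultra hmj)).trans (hultra i j m) }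

theorem posSemidef_indicator_le_of_ultrametric [DecidableLE α] (R : ι → ι → α) (t : α)
    (hdiag : ∀ i, t ≤ R i i) (hultra : ∀ i j m, R i m ⊓ R j m ≤ R i j) :
    (Matrix.of fun i j => if t ≤ R i j then (1 : A) else 0).PosSemidef :=
  letI : DecidableRel (overlapSetoid R t hdiag hultra) :=
    fun i j => inferInstanceAs (Decidable (t ≤ R i j))
  posSemidef_indicator_setoid (overlapSetoid R t hdiag hultra)

end Indicator

theorem kappa_matrix_eq_sum_smul_indicator {m n : Type*} (k : ℕ) (R : Matrix m n ℝ) :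
    (Matrix.of fun l l' => kappa k (R l l')) =
      ∑ j ∈ Finset.Icc 1 k, (k : ℝ)⁻¹ •
        Matrix.of fun l l' => if (j : ℝ) / k ≤ R l l' then (1 : ℝ) else 0 := by
  ext l l'
  simp only [kappa, Matrix.sum_apply, Matrix.smul_apply, Matrix.of_apply, smul_eq_mul]

theorem kappa_matrix_posSemidef_general {ι : Type*} (k : ℕ) (R : Matrix ι ι ℝ)
    (hdiag : ∀ l, 1 ≤ R l l) (hultra : ∀ l l' l'', min (R l l'') (R l' l'') ≤ R l l') :
    (Matrix.of fun l l' => kappa k (R l l')).PosSemidef := by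
  rw [kappa_matrix_eq_sum_smul_indicator]
  refine Matrix.posSemidef_sum _ fun j hj => Matrix.PosSemidef.smul ?_ (by positivity)
  have threshold_le_one : (j : ℝ) / k ≤ 1 :=
    div_le_one_of_le₀ (mod_cast (Finset.mem_Icc.mp hj).2) k.cast_nonneg
  exact posSemidef_indicator_le_of_ultrametric R _
    (fun l => threshold_le_one.trans (hdiag l)) hultra

/-- Under ultrametricity, the matrix `(κ(R_{l,l'}))` is symmetric positive semidefinite. -/
theorem kappa_matrix_posSemidef (k : ℕ) (hk : 1 ≤ k) (n : ℕ) (hn : 1 ≤ n)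
    (R : Matrix (Fin n) (Fin n) ℝ) (hsym : R.IsSymm) (hdiag : ∀ l, R l l = 1)
    (hrange : ∀ l l', R l l' ∈ Set.Icc (0 : ℝ) 1)
    (hultra : ∀ l l' l'', min (R l l'') (R l' l'') ≤ R l l') :
    (Matrix.of fun l l' => kappa k (R l l')).PosSemidef :=
  kappa_matrix_posSemidef_general k R (fun l => (hdiag l).ge) hultra
end
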